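/- Let K be a field of characteristic p > 0, let a, b ∈ ℕ^m with a ≠ b and a_i + b_i ≥ 1 for every i, and suppose the splitting polytope P has a unique maximal point η = (η_1, η_2) with η_1 + η_2 > 1. Then for every binomial f = u_1 x^a + u_2 x^b with u_1, u_2 ∈ K nonzero, the F-pure threshold of f at m = (x_1,…,x_m) equals 1; that is, ν_f(p^e)/p^e converges to 1. -/

import Mathlib

/-!
For `q = p ^ e` large, `ν_f(q) = q - 1` exactly, which gives the limit `1`.

* Upper bound: the coordinate sum is bounded on the polytope (it has a maximum), so neither exponent
  vector vanishes. Hence both monomials of `f` lie in the ideal of the variables, and by the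
  Frobenius `f ^ q` lies in its `q`-th Frobenius power.
* Lower bound: since `a ≠ b`, the monomials `x ^ (k a + (l - k) b)` in the expansion of `f ^ l` are
  pairwise distinct. Every `(q - 1).choose k` is `± 1` in characteristic `p`, so for `l = q - 1` no
  term drops out. It remains to find `k` with `k a_i + (q - 1 - k) b_i < q` for all `i`. Rescaling
  `η` to the line `s_1 + s_2 = 1` yields a point with all constraints strict, because
  `η_1 + η_2 > 1`; multiplying by `q - 1` and rounding costs only a bounded error, which the
  strictness absorbs once `q` is large.
-/


/-- The `q`-th Frobenius power `m^[q]` of the maximal ideal generated by the variables. -/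
noncomputable def frobeniusPower (K : Type*) [CommRing K] (σ : Type*) (q : ℕ) :
    Ideal (MvPolynomial σ K) :=
  Ideal.span (Set.range fun i : σ => (MvPolynomial.X i : MvPolynomial σ K) ^ q)

/-- `ν_f(q) = max { l : f ^ l ∉ m^[q] }`. -/
noncomputable def nu {K : Type*} [CommRing K] {σ : Type*} (f : MvPolynomial σ K) (q : ℕ) : ℕ :=
  sSup {l : ℕ | f ^ l ∉ frobeniusPower K σ q}


/-- The splitting polytope of the pair of exponent vectors `a, b : Fin m → ℕ`. -/
def splittingPolytope {m : ℕ} (a b : Fin m → ℕ) : Set (ℝ × ℝ) :=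
  {s | 0 ≤ s.1 ∧ 0 ≤ s.2 ∧ ∀ i, (a i : ℝ) * s.1 + (b i : ℝ) * s.2 ≤ 1}

/-- The lower interior of the splitting polytope. -/
def lowerInterior {m : ℕ} (a b : Fin m → ℕ) : Set (ℝ × ℝ) :=
  {s | 0 ≤ s.1 ∧ 0 ≤ s.2 ∧ ∀ i, (a i : ℝ) * s.1 + (b i : ℝ) * s.2 < 1}

/-- `η` is a maximal point of the splitting polytope: it maximizes the coordinate sum. -/
def isMaxPoint {m : ℕ} (a b : Fin m → ℕ) (η : ℝ × ℝ) : Prop :=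
  η ∈ splittingPolytope a b ∧ ∀ s ∈ splittingPolytope a b, s.1 + s.2 ≤ η.1 + η.2

open MvPolynomial in
theorem monomial_eq_C_mul_prod {K : Type*} [Field K] {m : ℕ} (a : Fin m → ℕ) (u : K) :
    (C u * ∏ i, X i ^ a i : MvPolynomial (Fin m) K)
      = monomial (Finsupp.equivFunOnFinite.symm a) u := by
  rw [monomial_eq, Finsupp.prod_fintype]
  · simp
  · simp

/-- In characteristic `p` one has `(p ^ e - 1).choose k = (-1) ^ k` for `k < p ^ e`. -/
theorem choose_prime_pow_sub_one {K : Type*} [Field K] (p : ℕ) [Fact p.Prime] [CharP K p]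
    (e k : ℕ) (hk : k < p ^ e) : (((p ^ e - 1).choose k : ℕ) : K) = (-1) ^ k := by
  induction k with
  | zero => simp
  | succ k ih =>
    have h1 : (p ^ e).choose (k + 1) = (p ^ e - 1).choose k + (p ^ e - 1).choose (k + 1) := by
      conv_lhs => rw [show p ^ e = (p ^ e - 1) + 1 by omega]
      exact Nat.choose_succ_succ _ _
    have h2 : (((p ^ e).choose (k + 1) : ℕ) : K) = 0 := by
      rw [CharP.cast_eq_zero_iff K p]
      exact (Fact.out : p.Prime).dvd_choose_pow (by omega) (by omega)
    rw [h1, Nat.cast_add, ih (by omega)] at h2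
    rw [pow_succ]
    linear_combination h2

theorem mem_frobeniusPower_iff {K : Type*} [Field K] {m : ℕ} (q : ℕ)
    (f : MvPolynomial (Fin m) K) :
    f ∈ frobeniusPower K (Fin m) q ↔ ∀ d ∈ f.support, ∃ i, q ≤ d i := by
  have h : (Set.range fun i : Fin m => (MvPolynomial.X i : MvPolynomial (Fin m) K) ^ q)
      = (fun s => MvPolynomial.monomial s (1 : K)) ''
          (Set.range fun i : Fin m => Finsupp.single i q) := by
    rw [← Set.range_comp]
    congr 1
    funext i
    simp [MvPolynomial.X_pow_eq_monomial]
  rw [frobeniusPower, h, MvPolynomial.mem_ideal_span_monomial_image]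
  simp [Finsupp.single_le_iff]

open MvPolynomial in
/-- The terms of the binomial expansion have distinct exponents, so no cancellation occurs. -/
theorem coeff_binomial_pow {K : Type*} [Field K] {m : ℕ} (A B : Fin m →₀ ℕ) (hAB : A ≠ B)
    (u1 u2 : K) (l k : ℕ) (hk : k ≤ l) :
    coeff (k • A + (l - k) • B) ((monomial A u1 + monomial B u2) ^ l)
      = u1 ^ k * u2 ^ (l - k) * (l.choose k : K) := by
  have hterm : ∀ j, (monomial A u1 ^ j * monomial B u2 ^ (l - j) * (l.choose j : ℕ) :
      MvPolynomial (Fin m) K)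
      = monomial (j • A + (l - j) • B) (u1 ^ j * u2 ^ (l - j) * (l.choose j : K)) := by
    intro j
    rw [monomial_pow, monomial_pow, monomial_mul,
      ← map_natCast (C : K →+* MvPolynomial (Fin m) K), mul_comm, C_mul_monomial, mul_comm]
  rw [add_pow, coeff_sum, Finset.sum_eq_single k]
  · rw [hterm, coeff_monomial, if_pos rfl]
  · intro j hj hjk
    rw [hterm, coeff_monomial, if_neg]
    intro h
    apply hAB
    ext i
    have hi := DFunLike.congr_fun h i
    simp only [Finsupp.add_apply, Finsupp.smul_apply, smul_eq_mul] at hi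
    have hj' : j ≤ l := by
      have := Finset.mem_range.mp hj
      omega
    zify [hj', hk] at hi ⊢
    have h3 : ((j : ℤ) - k) * ((A i : ℤ) - B i) = 0 := by linear_combination hi
    rcases mul_eq_zero.mp h3 with h4 | h4
    · exact absurd (by omega) hjk
    · omega
  · intro h
    exact absurd (Finset.mem_range.mpr (by omega)) h

/-- If neither exponent vector vanishes, then `f ^ q ∈ m^[q]` for `q = p ^ e`. -/
theorem pow_mem_frobeniusPower {K : Type*} [Field K] (p : ℕ) [Fact p.Prime] [CharP K p]
    {m : ℕ} (a b : Fin m → ℕ) (ha : ∃ i, a i ≠ 0) (hb : ∃ i, b i ≠ 0) (u1 u2 : K) (e : ℕ) :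
    (MvPolynomial.C u1 * ∏ i, MvPolynomial.X i ^ a i +
      MvPolynomial.C u2 * ∏ i, MvPolynomial.X i ^ b i) ^ (p ^ e)
      ∈ frobeniusPower K (Fin m) (p ^ e) := by
  have key : ∀ (c : Fin m → ℕ) (u : K), (∃ i, c i ≠ 0) →
      (MvPolynomial.C u * ∏ i, MvPolynomial.X i ^ c i) ^ (p ^ e)
        ∈ frobeniusPower K (Fin m) (p ^ e) := by
    rintro c u ⟨i, hi⟩
    refine Ideal.mem_of_dvd _ (pow_dvd_pow_of_dvd ?_ _)
      (Ideal.subset_span (Set.mem_range_self i))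
    exact Dvd.dvd.mul_left ((dvd_pow_self _ hi).trans
      (Finset.dvd_prod_of_mem (fun i => MvPolynomial.X i ^ c i) (Finset.mem_univ i))) _
  rw [add_pow_char_pow]
  exact Ideal.add_mem _ (key a u1 ha) (key b u2 hb)

theorem exists_ne_zero_of_isMaxPoint {m : ℕ} (a b : Fin m → ℕ) (η : ℝ × ℝ)
    (hη : isMaxPoint a b η) : (∃ i, a i ≠ 0) ∧ ∃ i, b i ≠ 0 := by
  obtain ⟨⟨h1, h2, h3⟩, hmax⟩ := hη
  -- If an exponent vector vanished, the polytope would be unbounded in that direction.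
  constructor
  · by_contra! h
    have := hmax (η.1 + 1, η.2) ⟨by positivity, h2, fun i => by simpa [h i] using h3 i⟩
    simp only at this
    linarith
  · by_contra! h
    have := hmax (η.1, η.2 + 1) ⟨h1, by positivity, fun i => by simpa [h i] using h3 i⟩
    simp only at this
    linarith

/-- A point of the polytope off the region `s_1 + s_2 ≤ 1` gives, for all large `n`, an integral
splitting `n = k + (n - k)` satisfying the constraints scaled by `n`. -/
theorem exists_splitting {m : ℕ} (a b : Fin m → ℕ) (η : ℝ × ℝ)
    (hη : η ∈ splittingPolytope a b) (hsum : 1 < η.1 + η.2) :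
    ∃ N : ℕ, ∀ n, N ≤ n → ∃ k ≤ n, ∀ i, k * a i + (n - k) * b i ≤ n := by
  obtain ⟨h1, h2, h3⟩ := hη
  set s := η.1 + η.2 with hs
  have hs0 : 0 < s := by linarith
  -- Rounding `k` down adds at most `b i` to the `i`-th constraint; `N` is chosen so that the
  -- slack `(1 - 1 / s) * n` exceeds every `b i`.
  obtain ⟨N, hN⟩ := exists_nat_gt (s * (∑ i, (b i : ℝ)) / (s - 1))
  refine ⟨N, fun n hn => ?_⟩
  have hn' : s * (∑ i, (b i : ℝ)) < n * (s - 1) := by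
    rw [div_lt_iff₀ (by linarith)] at hN
    have : (N : ℝ) ≤ n := by exact_mod_cast hn
    nlinarith
  have hx0 : 0 ≤ η.1 / s * n := by positivity
  have hk1 := Nat.floor_le hx0
  have hk2 := Nat.lt_floor_add_one (η.1 / s * n)
  set k := ⌊η.1 / s * (n : ℝ)⌋₊ with hk
  have hxs : s * (η.1 / s * n) = η.1 * n := by field_simp
  have hkn : k ≤ n := by
    have : η.1 / s ≤ 1 := (div_le_one hs0).mpr (by linarith)
    have h0 : (0 : ℝ) ≤ n := by positivity
    have : (k : ℝ) ≤ n := by nlinarith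
    exact_mod_cast this
  refine ⟨k, hkn, fun i => ?_⟩
  have hbi : (b i : ℝ) ≤ ∑ i, (b i : ℝ) :=
    Finset.single_le_sum (f := fun i => (b i : ℝ)) (fun _ _ => by positivity) (Finset.mem_univ i)
  have hA : (0 : ℝ) ≤ a i := by positivity
  have hB : (0 : ℝ) ≤ b i := by positivity
  have hn0 : (0 : ℝ) ≤ n := by positivity
  have e1 : s * (k * (a i : ℝ)) ≤ η.1 * n * a i := by
    rw [← hxs]
    nlinarith [mul_le_mul_of_nonneg_right hk1 hA]
  have e2 : s * ((n - k) * (b i : ℝ)) ≤ (η.2 * n + s) * b i := by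
    have h4 : s * ((n : ℝ) - k) ≤ η.2 * n + s := by nlinarith
    nlinarith [mul_le_mul_of_nonneg_right h4 hB]
  have e3 : ((a i : ℝ) * η.1 + b i * η.2) * n ≤ 1 * n :=
    mul_le_mul_of_nonneg_right (h3 i) hn0
  have e4 : s * (b i : ℝ) ≤ s * ∑ i, (b i : ℝ) := mul_le_mul_of_nonneg_left hbi hs0.le
  have : s * ((k : ℝ) * a i + (n - k) * b i) ≤ s * n := by nlinarith
  have h5 := le_of_mul_le_mul_left this hs0
  rw [← Nat.cast_sub hkn] at h5
  exact_mod_cast h5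

theorem stmt_11 {K : Type*} [Field K] (p : ℕ) [Fact p.Prime] [CharP K p]
    {m : ℕ} (a b : Fin m → ℕ) (hab : a ≠ b) (hvar : ∀ i, 1 ≤ a i + b i)
    (η : ℝ × ℝ) (hη : isMaxPoint a b η) (huniq : ∀ s, isMaxPoint a b s → s = η)
    (hsum : 1 < η.1 + η.2)
    (u1 u2 : K) (hu1 : u1 ≠ 0) (hu2 : u2 ≠ 0) :
    Filter.Tendsto (fun e : ℕ =>
        (nu (MvPolynomial.C u1 * ∏ i, MvPolynomial.X i ^ a i +
             MvPolynomial.C u2 * ∏ i, MvPolynomial.X i ^ b i) (p ^ e) : ℝ) / (p : ℝ) ^ e)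
      Filter.atTop (nhds 1) := by
  have hp : 1 < p := (Fact.out : p.Prime).one_lt
  obtain ⟨ha, hb⟩ := exists_ne_zero_of_isMaxPoint a b η hη
  obtain ⟨N, hN⟩ := exists_splitting a b η hη.1 hsum
  have hpow : Filter.Tendsto (fun e : ℕ => (p : ℝ) ^ e) Filter.atTop Filter.atTop :=
    tendsto_pow_atTop_atTop_of_one_lt (by exact_mod_cast hp)
  have hlim : Filter.Tendsto (fun e : ℕ => 1 - ((p : ℝ) ^ e)⁻¹) Filter.atTop (nhds 1) := by
    simpa using hpow.inv_tendsto_atTop.const_sub 1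
  refine hlim.congr' ?_
  filter_upwards [Filter.eventually_ge_atTop N] with e he
  have hq : e < p ^ e := Nat.lt_pow_self hp
  suffices h : nu (MvPolynomial.C u1 * ∏ i, MvPolynomial.X i ^ a i +
      MvPolynomial.C u2 * ∏ i, MvPolynomial.X i ^ b i) (p ^ e) = p ^ e - 1 by
    rw [h, Nat.cast_sub (by omega)]
    have : (p : ℝ) ^ e ≠ 0 := by positivity
    push_cast
    field_simp
  have hub : ∀ l ∈ {l : ℕ | (MvPolynomial.C u1 * ∏ i, MvPolynomial.X i ^ a i +
      MvPolynomial.C u2 * ∏ i, MvPolynomial.X i ^ b i) ^ l ∉ frobeniusPower K (Fin m) (p ^ e)},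
      l ≤ p ^ e - 1 := by
    intro l hl
    by_contra! hlt
    exact hl (Ideal.mem_of_dvd _ (pow_dvd_pow _ (by omega))
      (pow_mem_frobeniusPower p a b ha hb u1 u2 e))
  refine le_antisymm (csSup_le' hub) (le_csSup ⟨_, hub⟩ ?_)
  obtain ⟨k, hk, hki⟩ := hN (p ^ e - 1) (by omega)
  rw [Set.mem_setOf_eq, monomial_eq_C_mul_prod, monomial_eq_C_mul_prod, mem_frobeniusPower_iff]
  push Not
  refine ⟨k • Finsupp.equivFunOnFinite.symm a + (p ^ e - 1 - k) • Finsupp.equivFunOnFinite.symm b,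
    ?_, fun i => ?_⟩
  · rw [MvPolynomial.mem_support_iff, coeff_binomial_pow _ _ (by simpa using hab) _ _ _ _ hk,
      choose_prime_pow_sub_one p e k (by omega)]
    exact mul_ne_zero (mul_ne_zero (pow_ne_zero _ hu1) (pow_ne_zero _ hu2))
      (pow_ne_zero _ (by simp))
  · have := hki i
    simp only [Finsupp.add_apply, Finsupp.smul_apply, smul_eq_mul,
      Finsupp.equivFunOnFinite_symm_apply_apply]
    omega
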